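/- arXiv:1208.0085 — 2 statements merged into one kernel-verified Lean document; each statement's English description precedes it below -/
import Mathlib

section
/- For every finite forest F (a finite simple graph with no cycles), Min(F) ≤ Max(F). -/
/-!
Write `Max s`, `Min s` for the values of the game on the remaining vertex set `s`.

For any graph, deleting a vertex never increases a game value (`gameValue_sdiff_singleton_le`).

For a forest, suppose `x ∈ s` is a leaf whose only neighbour in `s` is `y`. Then
`Max s ≤ 1 + Max (s \ {x, y})` and `Min s ≤ 1 + Min (s \ {x, y})`
(`gameValue_le_of_leaf`): Min follows an optimal strategy
of the game on `s \ {x, y}`, and as long as `y` is unmatched the two games differ by this one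
pendant edge. Once Max matches `y`, either with `x` or with some `z`, Min is to move in what is,
up to the now isolated `x`, the reduced position with at most one vertex deleted; by monotonicity
the value is at most `Min (s \ {x, y})`, which is at most `Max (s \ {x, y})` by induction.

Since Max may open with the edge `xy`, this gives
`Min s ≤ 1 + Min (s \ {x, y}) ≤ Max s`, which completes the induction.
-/

open Finset

variable {V : Type*} [DecidableEq V]

/-- The legal moves in the matching game on `G` when the set of remaining
(undeleted) vertices is `s`: ordered pairs of adjacent remaining vertices. -/
def matchPlays (G : SimpleGraph V) [DecidableRel G.Adj] (s : Finset V) :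
    Finset (V × V) :=
  (s ×ˢ s).filter fun p => G.Adj p.1 p.2

lemma matchPlays_card {G : SimpleGraph V} [DecidableRel G.Adj] {s : Finset V}
    {p : V × V} (hp : p ∈ matchPlays G s) :
    (s \ {p.1, p.2}).card < s.card := by
  simp only [matchPlays, mem_filter, mem_product] at hp
  refine card_lt_card (Finset.sdiff_ssubset ?_ ⟨p.1, mem_insert_self _ _⟩)
  intro x hx
  rcases mem_insert.mp hx with h | h
  · exact h ▸ hp.1.1
  · exact (mem_singleton.mp h) ▸ hp.1.2

/-- The value of the matching game on the subgraph of `G` induced by the vertex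
set `s`, with Max to move if `maxTurn = true` and Min to move otherwise:
the number of *further* edges added to the matching under optimal play. -/
def gameValue (G : SimpleGraph V) [DecidableRel G.Adj] (maxTurn : Bool)
    (s : Finset V) : ℕ :=
  if h : (matchPlays G s).Nonempty then
    if maxTurn then
      (matchPlays G s).attach.sup
        fun p => 1 + gameValue G false (s \ {p.1.1, p.1.2})
    else
      (matchPlays G s).attach.inf' (by simpa using h)
        fun p => 1 + gameValue G true (s \ {p.1.1, p.1.2})
  else 0
termination_by s.card
decreasing_by
  · exact matchPlays_card p.2
  · exact matchPlays_card p.2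

/-- The Max-start game matching number `Max(G)`. -/
noncomputable def gameMax [Fintype V] (G : SimpleGraph V) : ℕ :=
  letI : DecidableRel G.Adj := Classical.decRel _
  gameValue G true Finset.univ

/-- The Min-start game matching number `Min(G)`. -/
noncomputable def gameMin [Fintype V] (G : SimpleGraph V) : ℕ :=
  letI : DecidableRel G.Adj := Classical.decRel _
  gameValue G false Finset.univ

/-- `M` is a matching in `G`: a set of edges of `G` that are pairwise
vertex-disjoint. -/
def IsMatchingSet (G : SimpleGraph V) (M : Finset (Sym2 V)) : Prop :=
  (∀ e ∈ M, e ∈ G.edgeSet) ∧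
    ∀ e ∈ M, ∀ f ∈ M, e ≠ f → ∀ v : V, v ∈ e → v ∉ f

/-- The matching number `α'(G)`: the maximum size of a matching in `G`. -/
noncomputable def matchingNumber (G : SimpleGraph V) : ℕ :=
  sSup {n | ∃ M : Finset (Sym2 V), IsMatchingSet G M ∧ M.card = n}

section Game

set_option linter.unusedSectionVars false

variable (G : SimpleGraph V) [DecidableRel G.Adj]

variable {G} in
lemma mem_matchPlays {s : Finset V} {a b : V} :
    (a, b) ∈ matchPlays G s ↔ a ∈ s ∧ b ∈ s ∧ G.Adj a b := by
  simp [matchPlays, and_assoc]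

lemma gameValue_of_no_edge {s : Finset V} (h : ∀ a ∈ s, ∀ b ∈ s, ¬ G.Adj a b) (t : Bool) :
    gameValue G t s = 0 := by
  rw [gameValue, dif_neg]
  rintro ⟨⟨a, b⟩, hp⟩
  rw [mem_matchPlays] at hp
  exact h a hp.1 b hp.2.1 hp.2.2

lemma le_gameValue_true {s : Finset V} {a b : V} (ha : a ∈ s) (hb : b ∈ s) (hab : G.Adj a b) :
    1 + gameValue G false (s \ {a, b}) ≤ gameValue G true s := by
  have hp : (a, b) ∈ matchPlays G s := mem_matchPlays.2 ⟨ha, hb, hab⟩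
  rw [gameValue.eq_def G true s, dif_pos ⟨_, hp⟩, if_pos rfl]
  exact Finset.le_sup (f := fun p : {x // x ∈ matchPlays G s} =>
    1 + gameValue G false (s \ {p.1.1, p.1.2})) (Finset.mem_attach _ ⟨(a, b), hp⟩)

lemma gameValue_false_le {s : Finset V} {a b : V} (ha : a ∈ s) (hb : b ∈ s) (hab : G.Adj a b) :
    gameValue G false s ≤ 1 + gameValue G true (s \ {a, b}) := by
  have hp : (a, b) ∈ matchPlays G s := mem_matchPlays.2 ⟨ha, hb, hab⟩
  rw [gameValue.eq_def G false s, dif_pos ⟨_, hp⟩, if_neg (by simp)]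
  exact Finset.inf'_le (f := fun p : {x // x ∈ matchPlays G s} =>
    1 + gameValue G true (s \ {p.1.1, p.1.2})) (Finset.mem_attach _ ⟨(a, b), hp⟩)

lemma gameValue_true_le {s : Finset V} {n : ℕ}
    (h : ∀ a ∈ s, ∀ b ∈ s, G.Adj a b → 1 + gameValue G false (s \ {a, b}) ≤ n) :
    gameValue G true s ≤ n := by
  rw [gameValue]
  by_cases hne : (matchPlays G s).Nonempty
  · rw [dif_pos hne, if_pos rfl]
    refine Finset.sup_le ?_
    rintro ⟨⟨a, b⟩, hp⟩ -
    obtain ⟨ha, hb, hab⟩ := mem_matchPlays.1 hp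
    exact h a ha b hb hab
  · rw [dif_neg hne]
    exact Nat.zero_le _

/-- An optimal first move for Min, if there is any move. -/
lemma exists_gameValue_false_eq {s : Finset V} (h : ∃ a ∈ s, ∃ b ∈ s, G.Adj a b) :
    ∃ a ∈ s, ∃ b ∈ s, G.Adj a b ∧
      gameValue G false s = 1 + gameValue G true (s \ {a, b}) := by
  obtain ⟨a, ha, b, hb, hab⟩ := h
  have hne : (matchPlays G s).Nonempty := ⟨(a, b), mem_matchPlays.2 ⟨ha, hb, hab⟩⟩
  rw [gameValue.eq_def G false s, dif_pos hne, if_neg (by simp)]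
  obtain ⟨⟨⟨c, d⟩, hp⟩, -, he⟩ := Finset.exists_mem_eq_inf'
    (s := (matchPlays G s).attach) (by simpa using hne)
    (fun p => 1 + gameValue G true (s \ {p.1.1, p.1.2}))
  obtain ⟨hc, hd, hcd⟩ := mem_matchPlays.1 hp
  exact ⟨c, hc, d, hd, hcd, he⟩

lemma sdiff_pair_ssubset {s : Finset V} {a b : V} (ha : a ∈ s) : s \ {a, b} ⊂ s :=
  ⟨Finset.sdiff_subset, fun h => by simpa using h ha⟩

/-- Isolated vertices are irrelevant to the game. -/
lemma gameValue_le_sdiff_singleton {w : V} (s : Finset V) :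
    (∀ z ∈ s, ¬ G.Adj w z) → ∀ t : Bool, gameValue G t s ≤ gameValue G t (s \ {w}) := by
  induction s using Finset.strongInduction with
  | H s ih =>
  intro hw t
  cases t with
  | true =>
    refine gameValue_true_le G fun a ha b hb hab => ?_
    have haw : a ≠ w := fun h => hw b hb (h ▸ hab)
    have hbw : b ≠ w := fun h => hw a ha (h ▸ hab.symm)
    have h1 := ih _ (sdiff_pair_ssubset (b := b) ha)
      (fun z hz => hw z (Finset.sdiff_subset hz)) false
    have h2 := le_gameValue_true G (s := s \ {w}) (by simp [ha, haw]) (by simp [hb, hbw]) hab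
    rw [sdiff_right_comm] at h1
    omega
  | false =>
    by_cases hE : ∃ a ∈ s \ {w}, ∃ b ∈ s \ {w}, G.Adj a b
    · obtain ⟨a, ha, b, hb, hab, he⟩ := exists_gameValue_false_eq G hE
      rw [Finset.mem_sdiff] at ha hb
      have h1 := ih _ (sdiff_pair_ssubset (b := b) ha.1)
        (fun z hz => hw z (Finset.sdiff_subset hz)) true
      have h2 := gameValue_false_le G ha.1 hb.1 hab
      rw [sdiff_right_comm] at h1
      omega
    · push Not at hE
      rw [gameValue_of_no_edge G (s := s)]
      · exact Nat.zero_le _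
      · intro a ha b hb hab
        have haw : a ≠ w := fun h => hw b hb (h ▸ hab)
        have hbw : b ≠ w := fun h => hw a ha (h ▸ hab.symm)
        exact hE a (by simp [ha, haw]) b (by simp [hb, hbw]) hab

/-- Vertex deletion does not increase the game values, in any graph. The delicate case is an
optimal first edge `vw` of Min using the deleted vertex `v`; Min then answers in the smaller graph
with an edge at `w`, or with an arbitrary edge if `w` is isolated there. -/
lemma gameValue_sdiff_singleton_le (s : Finset V) :
    ∀ (t : Bool) (v : V), gameValue G t (s \ {v}) ≤ gameValue G t s := by
  induction s using Finset.strongInduction with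
  | H s ih =>
  intro t v
  by_cases hv : v ∈ s
  swap
  · rw [Finset.sdiff_eq_self_of_disjoint (by simpa using hv)]
  have hss : s \ {v} ⊂ s := ⟨Finset.sdiff_subset, fun h => by simpa using h hv⟩
  cases t with
  | true =>
    refine gameValue_true_le G fun a ha b hb hab => ?_
    rw [Finset.mem_sdiff] at ha hb
    have h1 := ih _ (sdiff_pair_ssubset (b := b) ha.1) false v
    rw [sdiff_right_comm] at h1
    have h2 := le_gameValue_true G ha.1 hb.1 hab
    omega
  | false =>
    by_cases hE : ∃ a ∈ s \ {v}, ∃ b ∈ s \ {v}, G.Adj a b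
    swap
    · push Not at hE
      rw [gameValue_of_no_edge G hE]
      exact Nat.zero_le _
    -- the case of an optimal edge `vw`, up to the order of its endpoints
    have key : ∀ w ∈ s, G.Adj v w →
        gameValue G false (s \ {v}) ≤ 1 + gameValue G true (s \ {v, w}) := by
      intro w hw hvw
      have e1 : s \ {v, w} = (s \ {v}) \ {w} := by ext; simp; tauto
      by_cases hz : ∃ z ∈ s \ {v}, G.Adj w z
      · obtain ⟨z, hz, hwz⟩ := hz
        have hw' : w ∈ s \ {v} := by simp [hw, hvw.ne']
        have h1 := gameValue_false_le G hw' hz hwz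
        have h2 := ih (s \ {v, w}) (sdiff_pair_ssubset hv) true z
        have e2 : (s \ {v}) \ {w, z} = (s \ {v, w}) \ {z} := by ext; simp; tauto
        rw [e2] at h1
        omega
      · push Not at hz
        obtain ⟨a, ha, b, hb, hab⟩ := hE
        have h1 := gameValue_false_le G ha hb hab
        have h2 := gameValue_le_sdiff_singleton G (w := w) ((s \ {v}) \ {a, b})
          (fun z h => hz z (Finset.sdiff_subset h)) true
        have h3 := ih (s \ {v, w}) (sdiff_pair_ssubset hv) true a
        have h4 := ih ((s \ {v, w}) \ {a})
          (Finset.sdiff_subset.trans_ssubset (sdiff_pair_ssubset hv)) true b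
        have e2 : ((s \ {v}) \ {a, b}) \ {w} = ((s \ {v, w}) \ {a}) \ {b} := by
          ext; simp; tauto
        rw [e2] at h2
        omega
    obtain ⟨a, ha, b, hb, hab, he⟩ := exists_gameValue_false_eq G
      (s := s) (by
        obtain ⟨a, ha, b, hb, hab⟩ := hE
        exact ⟨a, Finset.sdiff_subset ha, b, Finset.sdiff_subset hb, hab⟩)
    rw [he]
    by_cases hav : a = v
    · subst hav
      exact key b hb hab
    by_cases hbv : b = v
    · subst hbv
      rw [Finset.pair_comm]
      exact key a ha hab.symm
    have h1 := gameValue_false_le G (s := s \ {v}) (by simp [ha, hav]) (by simp [hb, hbv]) hab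
    have h2 := ih _ (sdiff_pair_ssubset (b := b) ha) true v
    rw [sdiff_right_comm] at h2
    omega

/-- A pendant edge `xy` contributes at most one to either game value, provided that Min-start
values do not exceed Max-start values on proper subsets. -/
lemma gameValue_le_of_leaf {x y : V} (hxy : G.Adj x y) (s : Finset V) :
    x ∈ s → y ∈ s → (∀ z ∈ s, G.Adj x z → z = y) →
    (∀ u ⊂ s, gameValue G false u ≤ gameValue G true u) →
    ∀ t : Bool, gameValue G t s ≤ 1 + gameValue G t (s \ {x, y}) := by
  induction s using Finset.strongInduction with
  | H s ih =>
  intro hx hy hleaf hmm t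
  -- an edge avoiding `x` and `y` leaves `xy` a pendant edge
  have step : ∀ a ∈ s \ {x, y}, ∀ b ∈ s \ {x, y}, ∀ t : Bool,
      gameValue G t (s \ {a, b}) ≤ 1 + gameValue G t ((s \ {x, y}) \ {a, b}) := by
    intro a ha b hb t
    have hss := sdiff_pair_ssubset (b := b) (Finset.sdiff_subset ha)
    have h := ih _ hss (by simp at ha hb ⊢; grind) (by simp at ha hb ⊢; grind)
      (fun z hz => hleaf z (Finset.sdiff_subset hz))
      (fun u hu => hmm u (hu.trans hss)) t
    rwa [sdiff_right_comm] at h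
  have hmm' := hmm _ (sdiff_pair_ssubset (b := y) hx)
  cases t with
  | true =>
    -- Max matches `y`, with `x` or with another vertex
    have hyz : ∀ z ∈ s, G.Adj y z →
        gameValue G false (s \ {y, z}) ≤ gameValue G false (s \ {x, y}) := by
      intro z hz hadj
      by_cases hzx : z = x
      · rw [hzx, Finset.pair_comm]
      have h1 := gameValue_le_sdiff_singleton G (w := x) (s \ {y, z})
        (fun c hc hxc => by
          have := hleaf c (Finset.sdiff_subset hc) hxc
          simp [this] at hc) false
      have h2 := gameValue_sdiff_singleton_le G (s \ {x, y}) false z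
      have e : (s \ {y, z}) \ {x} = (s \ {x, y}) \ {z} := by ext; simp; tauto
      rw [e] at h1
      exact h1.trans h2
    refine gameValue_true_le G fun a ha b hb hab => ?_
    by_cases hay : a = y
    · subst hay
      have := hyz b hb hab
      omega
    by_cases hby : b = y
    · subst hby
      have := hyz a ha hab.symm
      rw [Finset.pair_comm a b]
      omega
    have hax : a ≠ x := fun h => hby (hleaf b hb (h ▸ hab))
    have hbx : b ≠ x := fun h => hay (hleaf a ha (h ▸ hab.symm))
    have ha' : a ∈ s \ {x, y} := by simp [ha, hax, hay]
    have hb' : b ∈ s \ {x, y} := by simp [hb, hbx, hby]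
    have h1 := step a ha' b hb' false
    have h2 := le_gameValue_true G ha' hb' hab
    omega
  | false =>
    by_cases hE : ∃ a ∈ s \ {x, y}, ∃ b ∈ s \ {x, y}, G.Adj a b
    · obtain ⟨a, ha, b, hb, hab, he⟩ := exists_gameValue_false_eq G hE
      have h1 := step a ha b hb true
      have h2 := gameValue_false_le G (Finset.sdiff_subset ha) (Finset.sdiff_subset hb) hab
      omega
    · push Not at hE
      have h1 := gameValue_false_le G hx hy hxy
      rw [gameValue_of_no_edge G hE] at h1 ⊢
      exact h1

variable {G} in
/-- An endpoint of a longest path of the induced forest is a leaf. -/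
lemma exists_leaf_of_isAcyclic (hG : G.IsAcyclic) {s : Finset V}
    (h : ∃ a ∈ s, ∃ b ∈ s, G.Adj a b) :
    ∃ x ∈ s, ∃ y ∈ s, G.Adj x y ∧ ∀ z ∈ s, G.Adj x z → z = y := by
  obtain ⟨a, ha, b, hb, hab⟩ := h
  let H := G.induce (s : Set V)
  have hH : H.IsAcyclic := hG.induce _
  have hab' : H.Adj ⟨a, ha⟩ ⟨b, hb⟩ := hab
  have : Nonempty (s : Set V) := ⟨⟨a, ha⟩⟩
  obtain ⟨u, v, p, hp, hmax⟩ := SimpleGraph.Walk.exists_isPath_forall_isPath_length_le_length H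
  have hlen := hmax _ _ hab'.toWalk (SimpleGraph.Walk.IsPath.of_adj hab')
  have hnil : ¬ p.Nil := by
    rw [← SimpleGraph.Walk.length_eq_zero_iff]
    simp at hlen
    omega
  refine ⟨u, u.2, p.snd, p.snd.2, p.adj_snd hnil, fun z hz hadj => ?_⟩
  have hadj' : H.Adj u ⟨z, hz⟩ := hadj
  have hmem : (⟨z, hz⟩ : (s : Set V)) ∈ p.support := by
    by_contra hc
    have := hmax _ _ (p.cons hadj'.symm) (hp.cons hc)
    simp at this
  exact congrArg Subtype.val (hH.eq_snd_of_adj_start hp hadj' hmem)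

lemma gameValue_false_le_true (hG : G.IsAcyclic) (s : Finset V) :
    gameValue G false s ≤ gameValue G true s := by
  induction s using Finset.strongInduction with
  | H s ih =>
  by_cases hE : ∃ a ∈ s, ∃ b ∈ s, G.Adj a b
  · obtain ⟨x, hx, y, hy, hxy, hleaf⟩ := exists_leaf_of_isAcyclic hG hE
    exact (gameValue_le_of_leaf G hxy s hx hy hleaf ih false).trans
      (le_gameValue_true G hx hy hxy)
  · push Not at hE
    rw [gameValue_of_no_edge G hE]
    exact Nat.zero_le _

end Game

/-- `Min(F) ≤ Max(F)` for every forest `F`. -/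
theorem stmt15 {V : Type*} [Fintype V] [DecidableEq V] (F : SimpleGraph V)
    (hF : F.IsAcyclic) :
    gameMin F ≤ gameMax F := by
  let : DecidableRel F.Adj := Classical.decRel _
  exact gameValue_false_le_true F hF Finset.univ
end

section
/- For every positive integer n, 3·⌊n/7⌋ ≤ Max(P_n) ≤ 3·⌈n/7⌉, where P_n is the path graph on n vertices. -/
/-!
A position of the game on a path is a disjoint union of paths, encoded as the list of the lengths
of its runs of remaining vertices, consecutive runs being separated by exactly one deleted vertex
(runs of length `0` are allowed). A move replaces a run of length `a + b + 2` by runs of lengths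
`a`, `0`, `b`.

Both bounds come from additive potentials on such lists. The weights `loW` and `hiW` agree
on runs of length at most `3`, where they are `7` times the number of edges that will be played
there; on runs of length `k ≥ 4` they are `3 * k - 3` and `3 * k + 1`.

* Lower bound: every move of Min lowers the `loW`-potential by at most `7 + 2`, and, as long as some
  run has length at least `4`, Max can split off a run of length `2`, lowering it by at most `7 - 2`.
* Upper bound: every move of Max lowers the `hiW`-potential by at least `7 - 2`, and, as long as some
  run has length at least `4`, Min can isolate a vertex, lowering it by at least `7 + 2`.

Once all runs have length at most `3` the number of further moves is forced
(`gameValue_of_small`). Hence `3 * n - 3 ≤ 7 * Max(P_n) ≤ 3 * n + 3` for `n ≥ 4`, and rounding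
gives the theorem.
-/

/-! ### The matching game -/

open Finset

variable {V : Type*} [DecidableEq V]

/-! ### One-move bounds for the game value -/

section GameRecursion

variable {G : SimpleGraph V} [DecidableRel G.Adj] {s : Finset V}

lemma le_gameValue_true_s17 {u v : V} (hu : u ∈ s) (hv : v ∈ s) (h : G.Adj u v) :
    1 + gameValue G false (s \ {u, v}) ≤ gameValue G true s := by
  have hp : (u, v) ∈ matchPlays G s := by simp [matchPlays, hu, hv, h]
  rw [gameValue.eq_1 G true s, dif_pos ⟨_, hp⟩, if_pos rfl]
  exact Finset.le_sup (f := fun p : {x // x ∈ matchPlays G s} =>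
    1 + gameValue G false (s \ {p.1.1, p.1.2})) (mem_attach _ ⟨(u, v), hp⟩)

lemma gameValue_true_le_s17 {K : ℕ}
    (H : ∀ u ∈ s, ∀ v ∈ s, G.Adj u v → 1 + gameValue G false (s \ {u, v}) ≤ K) :
    gameValue G true s ≤ K := by
  rw [gameValue.eq_1 G true s]
  by_cases h : (matchPlays G s).Nonempty
  · rw [dif_pos h, if_pos rfl]
    refine Finset.sup_le fun p _ => ?_
    have hp := p.2
    simp only [matchPlays, mem_filter, mem_product] at hp
    exact H _ hp.1.1 _ hp.1.2 hp.2
  · rw [dif_neg h]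
    exact Nat.zero_le _

lemma gameValue_false_le_s17 {u v : V} (hu : u ∈ s) (hv : v ∈ s) (h : G.Adj u v) :
    gameValue G false s ≤ 1 + gameValue G true (s \ {u, v}) := by
  have hp : (u, v) ∈ matchPlays G s := by simp [matchPlays, hu, hv, h]
  rw [gameValue.eq_1 G false s, dif_pos ⟨_, hp⟩, if_neg (by simp)]
  exact Finset.inf'_le (fun p : {x // x ∈ matchPlays G s} =>
    1 + gameValue G true (s \ {p.1.1, p.1.2})) (mem_attach _ ⟨(u, v), hp⟩)

lemma le_gameValue_false {K : ℕ} (hne : ∃ u ∈ s, ∃ v ∈ s, G.Adj u v)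
    (H : ∀ u ∈ s, ∀ v ∈ s, G.Adj u v → K ≤ 1 + gameValue G true (s \ {u, v})) :
    K ≤ gameValue G false s := by
  obtain ⟨u, hu, v, hv, h⟩ := hne
  have hp : (u, v) ∈ matchPlays G s := by simp [matchPlays, hu, hv, h]
  rw [gameValue.eq_1 G false s, dif_pos ⟨_, hp⟩, if_neg (by simp)]
  refine Finset.le_inf' _ _ fun p _ => ?_
  have hp := p.2
  simp only [matchPlays, mem_filter, mem_product] at hp
  exact H _ hp.1.1 _ hp.1.2 hp.2

lemma gameValue_of_no_play (t : Bool) (hne : ¬ ∃ u ∈ s, ∃ v ∈ s, G.Adj u v) :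
    gameValue G t s = 0 := by
  rw [gameValue.eq_1 G t s, dif_neg]
  rintro ⟨p, hp⟩
  simp only [matchPlays, mem_filter, mem_product] at hp
  exact hne ⟨_, hp.1.1, _, hp.1.2, hp.2⟩

end GameRecursion

/-! ### Positions on a path as lists of run lengths -/

/-- `InRuns o L x`: the number `x` lies in one of the consecutive runs whose lengths are listed
in `L`, the first run starting at `o` and any two successive runs being separated by one number. -/
def InRuns : ℕ → List ℕ → ℕ → Prop
  | _, [], _ => False
  | o, k :: L, x => (o ≤ x ∧ x < o + k) ∨ InRuns (o + k + 1) L x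

lemma InRuns.le {o x : ℕ} {L : List ℕ} (h : InRuns o L x) : o ≤ x := by
  induction L generalizing o with
  | nil => exact h.elim
  | cons k L ih =>
    rcases h with h | h
    · exact h.1
    · have := ih h
      omega

/-- A move on lists of run lengths: two adjacent vertices are deleted from one run. -/
def RunStep (L L' : List ℕ) : Prop :=
  ∃ L₁ L₂ a b, L = L₁ ++ (a + b + 2) :: L₂ ∧ L' = L₁ ++ a :: 0 :: b :: L₂

/-- Splitting the run `a + b + 2` removes exactly two consecutive numbers. -/
lemma InRuns.exists_of_split (L₁ L₂ : List ℕ) (a b o : ℕ) :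
    ∃ u, InRuns o (L₁ ++ (a + b + 2) :: L₂) u ∧ InRuns o (L₁ ++ (a + b + 2) :: L₂) (u + 1) ∧
      ∀ x, InRuns o (L₁ ++ a :: 0 :: b :: L₂) x ↔
        InRuns o (L₁ ++ (a + b + 2) :: L₂) x ∧ x ≠ u ∧ x ≠ u + 1 := by
  induction L₁ generalizing o with
  | nil =>
    refine ⟨o + a, Or.inl (by omega), Or.inl (by omega), fun x => ?_⟩
    simp only [List.nil_append, InRuns]
    have e : o + a + 1 + 0 + 1 + b + 1 = o + (a + b + 2) + 1 := by omega
    rw [e]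
    by_cases h : InRuns (o + (a + b + 2) + 1) L₂ x
    · have := h.le
      simp only [h, or_true, true_and, true_iff]
      omega
    · simp only [h, or_false]
      omega
  | cons k L₁ ih =>
    obtain ⟨u, h1, h2, h3⟩ := ih (o + k + 1)
    refine ⟨u, Or.inr h1, Or.inr h2, fun x => ?_⟩
    simp only [List.cons_append, InRuns, h3]
    have := h1.le
    constructor
    · rintro (h | h)
      · exact ⟨Or.inl h, by omega, by omega⟩
      · exact ⟨Or.inr h.1, h.2⟩
    · rintro ⟨h | h, h'⟩
      · exact Or.inl h
      · exact Or.inr ⟨h, h'⟩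

/-- Removing two consecutive numbers splits one of the runs. -/
lemma InRuns.exists_step {L : List ℕ} {o u : ℕ} (hu : InRuns o L u) (hv : InRuns o L (u + 1)) :
    ∃ L', RunStep L L' ∧ ∀ x, InRuns o L' x ↔ InRuns o L x ∧ x ≠ u ∧ x ≠ u + 1 := by
  induction L generalizing o with
  | nil => exact hu.elim
  | cons k L ih =>
    rcases hu with hu | hu
    · have hv' : u + 1 < o + k := by
        rcases hv with hv | hv
        · exact hv.2
        · have := hv.le
          omega
      obtain ⟨a, rfl⟩ := Nat.exists_eq_add_of_le hu.1
      obtain ⟨b, rfl⟩ : ∃ b, k = a + b + 2 := ⟨k - a - 2, by omega⟩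
      refine ⟨a :: 0 :: b :: L, ⟨[], L, a, b, rfl, rfl⟩, fun x => ?_⟩
      simp only [InRuns]
      have e : o + a + 1 + 0 + 1 + b + 1 = o + (a + b + 2) + 1 := by omega
      rw [e]
      by_cases h : InRuns (o + (a + b + 2) + 1) L x
      · have := h.le
        simp only [h, or_true, true_and, true_iff]
        omega
      · simp only [h, or_false]
        omega
    · have hule := hu.le
      have hv' : InRuns (o + k + 1) L (u + 1) := by
        rcases hv with hv | hv
        · omega
        · exact hv
      obtain ⟨L', ⟨L₁, L₂, a, b, rfl, rfl⟩, h3⟩ := ih hu hv'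
      refine ⟨k :: (L₁ ++ a :: 0 :: b :: L₂), ⟨k :: L₁, L₂, a, b, rfl, rfl⟩, fun x => ?_⟩
      simp only [InRuns, h3]
      constructor
      · rintro (h | h)
        · exact ⟨Or.inl h, by omega, by omega⟩
        · exact ⟨Or.inr h.1, h.2⟩
      · rintro ⟨h | h, h'⟩
        · exact Or.inl h
        · exact Or.inr ⟨h, h'⟩

/-- The set `s` of remaining vertices of `P_n` consists of the runs with lengths `L`. -/
def HasRuns {n : ℕ} (s : Finset (Fin n)) (L : List ℕ) : Prop :=
  ∀ x : ℕ, InRuns 0 L x ↔ ∃ h : x < n, (⟨x, h⟩ : Fin n) ∈ s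

section PathPositions

variable {n : ℕ} {s : Finset (Fin n)} {L : List ℕ}

lemma HasRuns.sdiff {L' : List ℕ} (hs : HasRuns s L) {u v : Fin n}
    (huv : u.val + 1 = v.val)
    (h : ∀ x, InRuns 0 L' x ↔ InRuns 0 L x ∧ x ≠ u.val ∧ x ≠ u.val + 1) :
    HasRuns (s \ {u, v}) L' := by
  intro x
  rw [h, hs x, huv]
  simp only [mem_sdiff, mem_insert, mem_singleton, not_or, Fin.ext_iff]
  exact ⟨fun ⟨⟨a, b⟩, c⟩ => ⟨a, b, c⟩, fun ⟨a, b, c⟩ => ⟨⟨a, b⟩, c⟩⟩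

lemma HasRuns.exists_play {L' : List ℕ} (hs : HasRuns s L) (h : RunStep L L') :
    ∃ u ∈ s, ∃ v ∈ s, (SimpleGraph.pathGraph n).Adj u v ∧ HasRuns (s \ {u, v}) L' := by
  obtain ⟨L₁, L₂, a, b, rfl, rfl⟩ := h
  obtain ⟨u, h1, h2, h3⟩ := InRuns.exists_of_split L₁ L₂ a b 0
  obtain ⟨hu, hus⟩ := (hs u).1 h1
  obtain ⟨hv, hvs⟩ := (hs (u + 1)).1 h2
  refine ⟨⟨u, hu⟩, hus, ⟨u + 1, hv⟩, hvs, ?_, hs.sdiff rfl h3⟩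
  rw [SimpleGraph.pathGraph_adj]
  exact Or.inl rfl

lemma HasRuns.exists_step (hs : HasRuns s L) {u v : Fin n} (hu : u ∈ s) (hv : v ∈ s)
    (h : (SimpleGraph.pathGraph n).Adj u v) :
    ∃ L', RunStep L L' ∧ HasRuns (s \ {u, v}) L' := by
  have key : ∀ u v : Fin n, u ∈ s → v ∈ s → u.val + 1 = v.val →
      ∃ L', RunStep L L' ∧ HasRuns (s \ {u, v}) L' := by
    intro u v hu hv huv
    have h1 : InRuns 0 L u.val := (hs _).2 ⟨u.2, hu⟩
    have h2 : InRuns 0 L (u.val + 1) := by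
      rw [huv]
      exact (hs _).2 ⟨v.2, hv⟩
    obtain ⟨L', hL', h3⟩ := h1.exists_step h2
    exact ⟨L', hL', hs.sdiff huv h3⟩
  rw [SimpleGraph.pathGraph_adj] at h
  rcases h with h | h
  · exact key u v hu hv h
  · rw [Finset.pair_comm]
    exact key v u hv hu h

lemma card_sdiff_pair_lt {u v : Fin n} (hu : u ∈ s) : (s \ {u, v}).card < s.card :=
  card_lt_card ((Finset.ssubset_iff_of_subset Finset.sdiff_subset).2 ⟨u, hu, by simp⟩)

/-! ### Potentials -/

/-- Weight of a run of length `k` in the potential used for the lower bound. -/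
def loW (k : ℕ) : ℕ := if k ≤ 1 then 0 else if k ≤ 3 then 7 else 3 * k - 3

/-- Weight of a run of length `k` in the potential used for the upper bound. -/
def hiW (k : ℕ) : ℕ := if k ≤ 1 then 0 else if k ≤ 3 then 7 else 3 * k + 1

lemma exists_long_run (h : ¬ ∀ k ∈ L, k ≤ 3) : ∃ L₁ L₂ m, L = L₁ ++ (m + 4) :: L₂ := by
  push Not at h
  obtain ⟨k, hk, hk3⟩ := h
  obtain ⟨L₁, L₂, rfl⟩ := List.append_of_mem hk
  exact ⟨L₁, L₂, k - 4, by rw [Nat.sub_add_cancel hk3]⟩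

/-- With all runs of length at most `3` every maximal play has the same length: one move for each
run of length `2` or `3`. -/
lemma gameValue_of_small [DecidableRel (SimpleGraph.pathGraph n).Adj] (t : Bool)
    (hs : HasRuns s L) (hL : ∀ k ∈ L, k ≤ 3) :
    7 * gameValue (SimpleGraph.pathGraph n) t s = (L.map loW).sum := by
  induction hc : s.card using Nat.strong_induction_on generalizing s L t with
  | _ c ih =>
  subst hc
  have step : ∀ t, ∀ u ∈ s, ∀ v ∈ s, (SimpleGraph.pathGraph n).Adj u v →
      7 * (1 + gameValue (SimpleGraph.pathGraph n) t (s \ {u, v})) = (L.map loW).sum := by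
    intro t u hu v hv huv
    obtain ⟨L', ⟨L₁, L₂, a, b, rfl, rfl⟩, hL'⟩ := hs.exists_step hu hv huv
    have hab : a + b + 2 ≤ 3 := hL _ (by simp)
    have hsmall : ∀ k ∈ L₁ ++ a :: 0 :: b :: L₂, k ≤ 3 := by
      intro k hk
      simp only [List.mem_append, List.mem_cons] at hk hL
      rcases hk with hk | rfl | rfl | rfl | hk
      · exact hL k (Or.inl hk)
      · omega
      · omega
      · omega
      · exact hL k (Or.inr (Or.inr hk))
    have := ih _ (card_sdiff_pair_lt hu) t hL' hsmall rfl
    simp only [List.map_append, List.map_cons, List.sum_append, List.sum_cons] at this ⊢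
    have hw : loW a + loW 0 + loW b + 7 = loW (a + b + 2) := by
      unfold loW
      split_ifs <;> omega
    omega
  by_cases hne : ∃ u ∈ s, ∃ v ∈ s, (SimpleGraph.pathGraph n).Adj u v
  · obtain ⟨u, hu, v, hv, huv⟩ := id hne
    cases t with
    | true =>
      have h1 := le_gameValue_true_s17 hu hv huv
      have h2 := step false u hu v hv huv
      have h3 : gameValue (SimpleGraph.pathGraph n) true s ≤ (L.map loW).sum / 7 :=
        gameValue_true_le_s17 fun u hu v hv huv => by
          have := step false u hu v hv huv
          omega
      omega
    | false =>
      have h1 := gameValue_false_le_s17 hu hv huv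
      have h2 := step true u hu v hv huv
      have h3 : (L.map loW).sum / 7 ≤ gameValue (SimpleGraph.pathGraph n) false s :=
        le_gameValue_false hne fun u hu v hv huv => by
          have := step true u hu v hv huv
          omega
      omega
  · rw [gameValue_of_no_play t hne, eq_comm, Nat.mul_zero, List.sum_eq_zero]
    intro w hw
    obtain ⟨k, hk, rfl⟩ := List.mem_map.1 hw
    obtain ⟨L₁, L₂, rfl⟩ := List.append_of_mem hk
    by_cases hk1 : k ≤ 1
    · simp [loW, hk1]
    · obtain ⟨m, rfl⟩ : ∃ m, k = 0 + m + 2 := ⟨k - 2, by omega⟩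
      obtain ⟨u, hu, v, hv, huv, -⟩ := hs.exists_play ⟨L₁, L₂, 0, m, rfl, rfl⟩
      exact absurd ⟨u, hu, v, hv, huv⟩ hne

lemma loW_le_gameValue [DecidableRel (SimpleGraph.pathGraph n).Adj] (hs : HasRuns s L) :
    (L.map loW).sum ≤ 7 * gameValue (SimpleGraph.pathGraph n) true s ∧
      (L.map loW).sum ≤ 7 * gameValue (SimpleGraph.pathGraph n) false s + 2 := by
  induction hc : s.card using Nat.strong_induction_on generalizing s L with
  | _ c ih =>
  subst hc
  by_cases hL : ∀ k ∈ L, k ≤ 3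
  · rw [gameValue_of_small true hs hL, gameValue_of_small false hs hL]
    omega
  obtain ⟨L₁, L₂, m, rfl⟩ := exists_long_run hL
  -- Max splits off a run of length `2`.
  have hstep : RunStep (L₁ ++ (m + 4) :: L₂) (L₁ ++ 2 :: 0 :: m :: L₂) :=
    ⟨L₁, L₂, 2, m, by rw [show 2 + m + 2 = m + 4 by omega], rfl⟩
  obtain ⟨u, hu, v, hv, huv, hs'⟩ := hs.exists_play hstep
  constructor
  · have h1 := le_gameValue_true_s17 hu hv huv
    have h2 := (ih _ (card_sdiff_pair_lt hu) hs' rfl).2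
    simp only [List.map_append, List.map_cons, List.sum_append, List.sum_cons] at h2 ⊢
    have hw : loW (m + 4) + 2 ≤ loW 2 + loW 0 + loW m + 7 := by
      unfold loW
      split_ifs <;> omega
    omega
  · have h3 : ((L₁ ++ (m + 4) :: L₂).map loW).sum - 2 ≤
        7 * gameValue (SimpleGraph.pathGraph n) false s := by
      have : (((L₁ ++ (m + 4) :: L₂).map loW).sum - 2 + 6) / 7 ≤
          gameValue (SimpleGraph.pathGraph n) false s := by
        refine le_gameValue_false ⟨u, hu, v, hv, huv⟩ fun u hu v hv huv => ?_
        obtain ⟨L', ⟨M₁, M₂, a, b, e, rfl⟩, hL'⟩ := hs.exists_step hu hv huv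
        have h2 := (ih _ (card_sdiff_pair_lt hu) hL' rfl).1
        rw [e]
        simp only [List.map_append, List.map_cons, List.sum_append, List.sum_cons] at h2 ⊢
        have hw : loW (a + b + 2) ≤ loW a + loW 0 + loW b + 9 := by
          unfold loW
          split_ifs <;> omega
        omega
      omega
    omega

lemma gameValue_le_hiW [DecidableRel (SimpleGraph.pathGraph n).Adj] (hs : HasRuns s L) :
    7 * gameValue (SimpleGraph.pathGraph n) false s ≤ (L.map hiW).sum ∧
      7 * gameValue (SimpleGraph.pathGraph n) true s ≤ (L.map hiW).sum + 2 := by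
  induction hc : s.card using Nat.strong_induction_on generalizing s L with
  | _ c ih =>
  subst hc
  by_cases hL : ∀ k ∈ L, k ≤ 3
  · have e : L.map loW = L.map hiW :=
      List.map_congr_left fun k hk => by simp [loW, hiW, hL k hk]
    rw [gameValue_of_small true hs hL, gameValue_of_small false hs hL, e]
    omega
  obtain ⟨L₁, L₂, m, rfl⟩ := exists_long_run hL
  constructor
  · -- Min isolates the first vertex of a long run.
    have hstep : RunStep (L₁ ++ (m + 4) :: L₂) (L₁ ++ 1 :: 0 :: (m + 1) :: L₂) :=
      ⟨L₁, L₂, 1, m + 1, by rw [show 1 + (m + 1) + 2 = m + 4 by omega], rfl⟩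
    obtain ⟨u, hu, v, hv, huv, hs'⟩ := hs.exists_play hstep
    have h1 := gameValue_false_le_s17 hu hv huv
    have h2 := (ih _ (card_sdiff_pair_lt hu) hs' rfl).2
    simp only [List.map_append, List.map_cons, List.sum_append, List.sum_cons] at h2 ⊢
    have hw : hiW 1 + hiW 0 + hiW (m + 1) + 9 ≤ hiW (m + 4) := by
      unfold hiW
      split_ifs <;> omega
    omega
  · have : gameValue (SimpleGraph.pathGraph n) true s ≤
        (((L₁ ++ (m + 4) :: L₂).map hiW).sum + 2) / 7 := by
      refine gameValue_true_le_s17 fun u hu v hv huv => ?_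
      obtain ⟨L', ⟨M₁, M₂, a, b, e, rfl⟩, hL'⟩ := hs.exists_step hu hv huv
      have h2 := (ih _ (card_sdiff_pair_lt hu) hL' rfl).1
      rw [e]
      simp only [List.map_append, List.map_cons, List.sum_append, List.sum_cons] at h2 ⊢
      have hw : hiW a + hiW 0 + hiW b + 5 ≤ hiW (a + b + 2) := by
        unfold hiW
        split_ifs <;> omega
      omega
    omega

end PathPositions

/-- `3⌊n/7⌋ ≤ Max(P_n) ≤ 3⌈n/7⌉`. -/
theorem stmt17 (n : ℕ) (hn : 1 ≤ n) :
    3 * (n / 7) ≤ gameMax (SimpleGraph.pathGraph n) ∧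
    gameMax (SimpleGraph.pathGraph n) ≤ 3 * ((n + 6) / 7) := by
  unfold gameMax
  let : DecidableRel (SimpleGraph.pathGraph n).Adj := Classical.decRel _
  have hs : HasRuns (Finset.univ : Finset (Fin n)) [n] := by
    intro x
    simp [InRuns]
  have h1 := (loW_le_gameValue hs).1
  have h2 := (gameValue_le_hiW hs).2
  simp only [List.map_cons, List.map_nil, List.sum_cons, List.sum_nil, loW, hiW] at h1 h2
  constructor
  · split_ifs at h1 <;> omega
  · split_ifs at h2 <;> omega
end
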